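/- arXiv:1709.02870 — 3 statements merged into one kernel-verified Lean document; each statement's English description precedes it below -/
import Mathlib

section
/- Let i ≥ 1. Then the degree -i jumping ideal of M equals the product of the degree -i and degree -(i+1) fitting ideals: J^{-i}(M) = I^{-i}(M) · I^{-i-1}(M) as ideals of R. -/
/-!
An `N × N` submatrix of the block diagonal matrix `B ⊕ A` has nonzero determinant only if it
consists of a `p × p` block of `B` and a `q × q` block of `A`, with `p + q = N`
(some term of the Leibniz expansion is nonzero, and it matches rows and columns blockwise). Hence
`I_N(B ⊕ A) = ∑_{p + q = N} I_p(B) I_q(A)`.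

Over a domain the determinantal rank of a matrix is its rank over the fraction field `K`
(`detRank_eq_rank`). Exactness of the resolution at `F^{-i}` survives tensoring with `K`, so
rank-nullity gives `rank ∂^{-i} + rank ∂^{-i-1} = rank F^{-i}` (`detRank_add_detRank`). With
`N = rank F^{-i}`, a summand `I_p(∂^{-i-1}) I_q(∂^{-i})` is therefore nonzero only if `p` and `q`
are the two ranks, and the sum reduces to the product of the two fitting ideals.
-/

/-!
Context: `R` is a Noetherian Cohen–Macaulay integral domain and `M` is a nonzero finitely
generated `R`-module with a finite free resolution
`0 → F^{-l} → ⋯ → F^{-1} → F^{0} → M → 0`.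
We encode the resolution by the ranks `r i` of the free modules `F^{-i}` (with `r i = 0` for
`i > l`) and by matrices `D i` representing the differentials `∂^{-(i+1)} : F^{-(i+1)} → F^{-i}`
(so for `i ≥ 1` the differential `∂^{-i}` is the matrix `D (i-1)`), together with a surjection
`π : F^0 → M` with `ker π = im ∂^{-1}` and exactness `ker ∂^{-(i+1)} = im ∂^{-(i+2)}`
for all `i ≥ 0`.
-/

/-- The ideal of `R` generated by all `k × k` minors of the matrix `A`.  For `k = 0` this is the
unit ideal, and it is the zero ideal when `k` exceeds the number of rows or columns. -/
noncomputable def minorsIdeal {R : Type*} [CommRing R] {m n : Type*} [Fintype m] [Fintype n]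
    (k : ℕ) (A : Matrix m n R) : Ideal R :=
  Ideal.span {x : R | ∃ (f : Fin k → m) (g : Fin k → n), x = (A.submatrix f g).det}

/-- The rank of a matrix over a domain: the largest `k` such that some `k × k` minor of `A`
is nonzero. -/
noncomputable def detRank {R : Type*} [CommRing R] {m n : Type*} [Fintype m] [Fintype n]
    (A : Matrix m n R) : ℕ :=
  sSup {k : ℕ | minorsIdeal k A ≠ ⊥}

/-- The determinantal (fitting-type) ideal `I_{rank A}(A)` of a matrix `A`; applied to the matrix
of `∂^{-i}` it gives the degree `-i` fitting ideal `I^{-i}(M)`. -/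
noncomputable def fittingIdealOf {R : Type*} [CommRing R] {m n : Type*} [Fintype m] [Fintype n]
    (A : Matrix m n R) : Ideal R :=
  minorsIdeal (detRank A) A

/-- The degree `-i` jumping ideal `J^{-i}(M) = I_{rank F^{-i}}(∂^{-i-1} ⊕ ∂^{-i})` of a free
resolution with ranks `r i = rank F^{-i}` and differentials `D i = ∂^{-(i+1)}`.
For `i = 0` the map `∂^0` is zero and `F^1 = 0`, so the block matrix of `∂^{-1} ⊕ ∂^0` has the
same minors of size `r 0` as the matrix of `∂^{-1}` alone. -/
noncomputable def jumpIdeal {R : Type*} [CommRing R] (r : ℕ → ℕ)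
    (D : ∀ i : ℕ, Matrix (Fin (r i)) (Fin (r (i + 1))) R) : ℕ → Ideal R
  | 0 => minorsIdeal (r 0) (D 0)
  | (i + 1) => minorsIdeal (r (i + 1)) (Matrix.fromBlocks (D (i + 1)) 0 0 (D i))

/-- The height (codimension) of an ideal: the infimum of `Order.height` (in the prime spectrum
ordered by inclusion) over all primes containing it. -/
noncomputable def idealHeight (R : Type*) [CommRing R] (I : Ideal R) : ℕ∞ :=
  ⨅ (p : PrimeSpectrum R) (_ : I ≤ p.asIdeal), Order.height p

/-- The depth (grade) of an ideal `I` of `R`: the supremum of the lengths of regular sequences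
on `R` consisting of elements of `I`. -/
noncomputable def idealDepth (R : Type*) [CommRing R] (I : Ideal R) : ℕ∞ :=
  sSup {n : ℕ∞ | ∃ rs : List R, (rs.length : ℕ∞) = n ∧ (∀ x ∈ rs, x ∈ I) ∧
    RingTheory.Sequence.IsRegular R rs}

/-- A Noetherian ring is Cohen–Macaulay if and only if for every proper ideal its depth (grade)
equals its height (codimension); we take this characterization as the definition. -/
def IsCohenMacaulayRing (R : Type*) [CommRing R] : Prop :=
  ∀ I : Ideal R, I ≠ ⊤ → idealDepth R I = idealHeight R I

/-! ### Ranks and minors -/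

section Minors

variable {R : Type*} [CommRing R] {m n : Type*} [Fintype m] [Fintype n]

/-- Minors indexed by an arbitrary finite type of cardinality `k` are `k × k` minors. -/
lemma det_submatrix_mem_minorsIdeal {ι : Type*} [Fintype ι] [DecidableEq ι] {k : ℕ}
    (hk : Fintype.card ι = k) (A : Matrix m n R) (f : ι → m) (g : ι → n) :
    (A.submatrix f g).det ∈ minorsIdeal k A := by
  let e : Fin k ≃ ι := (Fintype.equivFinOfCardEq hk).symm
  refine Ideal.subset_span ⟨f ∘ e, g ∘ e, ?_⟩
  rw [← Matrix.submatrix_submatrix, Matrix.det_submatrix_equiv_self]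

/-- A nonvanishing maximal-rank minor exists: pick independent columns spanning the column space,
then independent rows of the resulting matrix. -/
lemma exists_det_submatrix_ne_zero {K : Type*} [Field K] (A : Matrix m n K) :
    ∃ (f : Fin A.rank → m) (g : Fin A.rank → n), (A.submatrix f g).det ≠ 0 := by
  classical
  have hcols := Submodule.exists_fun_fin_finrank_span_eq K (Set.range A.col)
  rw [← A.rank_eq_finrank_span_cols] at hcols
  obtain ⟨c, hc, -, hci⟩ := hcols
  choose g hg using hc
  have hrk : (A.submatrix id g).rank = A.rank := by
    rw [← Matrix.rank_transpose, LinearIndependent.rank_matrix, Fintype.card_fin]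
    obtain rfl : (fun i => A.col (g i)) = c := funext hg
    exact hci
  have hrows := Submodule.exists_fun_fin_finrank_span_eq K (Set.range (A.submatrix id g).row)
  rw [← Matrix.rank_eq_finrank_span_row, hrk] at hrows
  obtain ⟨c', hc', -, hci'⟩ := hrows
  choose f hf using hc'
  refine ⟨f, g, IsUnit.ne_zero ((Matrix.isUnit_iff_isUnit_det _).1
    (Matrix.linearIndependent_rows_iff_isUnit.1 ?_))⟩
  obtain rfl : (fun i => (A.submatrix id g).row (f i)) = c' := funext hf
  exact hci'

lemma le_rank_of_det_submatrix_ne_zero {K ι κ : Type*} [Field K] [Fintype κ] (A : Matrix ι κ K)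
    {k : ℕ} (f : Fin k → ι) (g : Fin k → κ) (h : (A.submatrix f g).det ≠ 0) : k ≤ A.rank := by
  have h1 : (A.submatrix f g).rank = k := by
    simpa using Matrix.rank_of_det_ne_zero h
  have h2 := Matrix.rank_submatrix_le A f g
  omega

lemma minorsIdeal_ne_bot_iff (k : ℕ) (A : Matrix m n R) :
    minorsIdeal k A ≠ ⊥ ↔ ∃ (f : Fin k → m) (g : Fin k → n), (A.submatrix f g).det ≠ 0 := by
  rw [minorsIdeal, Ne, Ideal.span_eq_bot]
  push Not
  constructor
  · rintro ⟨x, ⟨f, g, rfl⟩, h⟩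
    exact ⟨f, g, h⟩
  · rintro ⟨f, g, h⟩
    exact ⟨_, ⟨f, g, rfl⟩, h⟩

lemma det_map_ne_zero_iff {k : ℕ} {ι κ : Type*} (A : Matrix ι κ R) (f : Fin k → ι) (g : Fin k → κ) :
    ((A.map (algebraMap R (FractionRing R))).submatrix f g).det ≠ 0 ↔
      (A.submatrix f g).det ≠ 0 := by
  rw [Matrix.submatrix_map, ← RingHom.mapMatrix_apply, ← RingHom.map_det]
  simp

variable [IsDomain R]

lemma le_rank_of_minorsIdeal_ne_bot {k : ℕ} {A : Matrix m n R} (h : minorsIdeal k A ≠ ⊥) :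
    k ≤ (A.map (algebraMap R (FractionRing R))).rank := by
  obtain ⟨f, g, h⟩ := (minorsIdeal_ne_bot_iff k A).1 h
  exact le_rank_of_det_submatrix_ne_zero _ f g ((det_map_ne_zero_iff A f g).2 h)

/-- The determinantal rank is the rank over the fraction field. -/
lemma detRank_eq_rank (A : Matrix m n R) :
    detRank A = (A.map (algebraMap R (FractionRing R))).rank := by
  refine IsGreatest.csSup_eq ⟨?_, fun k hk => le_rank_of_minorsIdeal_ne_bot hk⟩
  obtain ⟨f, g, h⟩ := exists_det_submatrix_ne_zero (A.map (algebraMap R (FractionRing R)))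
  exact (minorsIdeal_ne_bot_iff _ A).2 ⟨f, g, (det_map_ne_zero_iff A f g).1 h⟩

lemma le_detRank {k : ℕ} {A : Matrix m n R} (h : minorsIdeal k A ≠ ⊥) : k ≤ detRank A :=
  (le_rank_of_minorsIdeal_ne_bot h).trans_eq (detRank_eq_rank A).symm

/-- Rank-nullity for an exact pair. Localization is exact, so the sequence stays exact over the
fraction field; concretely, a kernel vector lies in the image after clearing denominators. -/
lemma detRank_add_detRank {l : Type*} [Fintype l] (A : Matrix l m R) (B : Matrix m n R)
    (h : LinearMap.ker A.mulVecLin = LinearMap.range B.mulVecLin) :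
    detRank A + detRank B = Fintype.card m := by
  classical
  let φ := algebraMap R (FractionRing R)
  have hφ : Function.Injective φ := IsFractionRing.injective R _
  have hex : LinearMap.ker (A.map φ).mulVecLin = LinearMap.range (B.map φ).mulVecLin := by
    apply le_antisymm
    · intro v hv
      obtain ⟨d, hd⟩ := IsLocalization.exist_integer_multiples_of_finite (nonZeroDivisors R) v
      choose w hw using hd
      have hw' : φ ∘ w = φ d • v := by
        funext i
        simpa [Algebra.smul_def] using hw i
      have hAw : w ∈ LinearMap.ker A.mulVecLin := by
        rw [LinearMap.mem_ker, Matrix.mulVecLin_apply] at hv ⊢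
        funext i
        apply hφ
        rw [RingHom.map_mulVec, hw', Matrix.mulVec_smul, hv]
        simp
      rw [h] at hAw
      obtain ⟨u, hu⟩ := hAw
      have hd0 : φ d ≠ 0 := by
        simp [φ]
      refine ⟨(φ d)⁻¹ • (φ ∘ u), ?_⟩
      have : (B.map φ).mulVec (φ ∘ u) = φ d • v := by
        rw [← hw', ← hu]
        funext i
        exact (RingHom.map_mulVec φ B u i).symm
      rw [Matrix.mulVecLin_apply, Matrix.mulVec_smul, this, inv_smul_smul₀ hd0]
    · have hAB : A * B = 0 := by
        apply Matrix.toLin'.injective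
        rw [map_zero, Matrix.toLin'_apply', Matrix.mulVecLin_mul, ← LinearMap.range_le_ker_iff, h]
      rw [LinearMap.range_le_ker_iff, ← Matrix.mulVecLin_mul, ← Matrix.map_mul, hAB]
      simp
  rw [detRank_eq_rank, detRank_eq_rank, Matrix.rank, Matrix.rank, ← hex,
    LinearMap.finrank_range_add_finrank_ker]
  simp

end Minors

/-! ### Minors of a block diagonal matrix -/

section Blocks

variable {R : Type*} [CommRing R] {m₁ m₂ n₁ n₂ : Type*} [Fintype m₁] [Fintype m₂] [Fintype n₁]
  [Fintype n₂]

lemma mul_minorsIdeal_le (B : Matrix m₁ n₁ R) (A : Matrix m₂ n₂ R) (p q : ℕ) :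
    minorsIdeal p B * minorsIdeal q A ≤ minorsIdeal (p + q) (Matrix.fromBlocks B 0 0 A) := by
  rw [minorsIdeal, minorsIdeal, Ideal.span_mul_span', Ideal.span_le]
  rintro _ ⟨_, ⟨f₁, g₁, rfl⟩, _, ⟨f₂, g₂, rfl⟩, rfl⟩
  have h := det_submatrix_mem_minorsIdeal (ι := Fin p ⊕ Fin q) (k := p + q) (by simp)
    (Matrix.fromBlocks B 0 0 A) (Sum.map f₁ f₂) (Sum.map g₁ g₂)
  have h2 : (Matrix.fromBlocks B 0 0 A).submatrix (Sum.map f₁ f₂) (Sum.map g₁ g₂) =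
      Matrix.fromBlocks (B.submatrix f₁ g₁) 0 0 (A.submatrix f₂ g₂) := by
    ext (i | i) (j | j) <;> rfl
  rwa [h2, Matrix.det_fromBlocks_zero₂₁] at h

/-- A minor of `B ⊕ A` whose rows and columns are matched blockwise is a product of a minor of `B`
and a minor of `A`. -/
lemma exists_det_submatrix_fromBlocks_eq {N : ℕ} (B : Matrix m₁ n₁ R) (A : Matrix m₂ n₂ R)
    (f : Fin N → m₁ ⊕ m₂) (g : Fin N → n₁ ⊕ n₂) (hfg : ∀ i, (f i).isLeft = (g i).isLeft) :
    ∃ p q : ℕ, p + q = N ∧ ∃ x ∈ minorsIdeal p B, ∃ y ∈ minorsIdeal q A,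
      ((Matrix.fromBlocks B 0 0 A).submatrix f g).det = x * y := by
  let P : Fin N → Prop := fun i => (g i).isLeft = true
  have hN : Fintype.card {i // P i} + Fintype.card {i // ¬ P i} = N := by
    rw [← Fintype.card_sum, Fintype.card_congr (Equiv.sumCompl P), Fintype.card_fin]
  have hfr : ∀ i, ¬ P i → (f i).isRight = true := fun i hi => by
    simpa [← hfg i, P] using hi
  have hgr : ∀ i, ¬ P i → (g i).isRight = true := fun i hi => by
    simpa [P] using hi
  refine ⟨_, _, hN, _, det_submatrix_mem_minorsIdeal rfl B
    (fun i : {i // P i} => (f i).getLeft ((hfg i).trans i.2)) (fun i => (g i).getLeft i.2),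
    _, det_submatrix_mem_minorsIdeal rfl A
    (fun i : {i // ¬ P i} => (f i).getRight (hfr i i.2)) (fun i => (g i).getRight (hgr i i.2)), ?_⟩
  rw [Matrix.twoBlockTriangular_det _ P]
  · congr 2
    · ext ⟨i, hi⟩ ⟨j, hj⟩
      have hi' : (f i).isLeft = true := (hfg i).trans hi
      have hj' : (g j).isLeft = true := hj
      obtain ⟨a, ha⟩ := Sum.isLeft_iff.1 hi'
      obtain ⟨b, hb⟩ := Sum.isLeft_iff.1 hj'
      simp [Matrix.toSquareBlockProp, ha, hb]
    · ext ⟨i, hi⟩ ⟨j, hj⟩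
      obtain ⟨a, ha⟩ := Sum.isRight_iff.1 (hfr i hi)
      obtain ⟨b, hb⟩ := Sum.isRight_iff.1 (hgr j hj)
      simp [Matrix.toSquareBlockProp, ha, hb]
  · intro i hi j hj
    obtain ⟨a, ha⟩ := Sum.isRight_iff.1 (hfr i hi)
    obtain ⟨b, hb⟩ := Sum.isLeft_iff.1 (show (g j).isLeft = true from hj)
    simp [ha, hb]

/-- The inclusion `I_N(B ⊕ A) ≤ ∑_{p + q = N} I_p(B) I_q(A)`, with the sum replaced by an arbitrary
upper bound `J` of its terms. A nonzero minor of `B ⊕ A` has a nonzero term in its Leibniz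
expansion; the corresponding permutation matches the rows and columns blockwise. -/
lemma minorsIdeal_fromBlocks_le {N : ℕ} (B : Matrix m₁ n₁ R) (A : Matrix m₂ n₂ R) (J : Ideal R)
    (hJ : ∀ p q, p + q = N → minorsIdeal p B * minorsIdeal q A ≤ J) :
    minorsIdeal N (Matrix.fromBlocks B 0 0 A) ≤ J := by
  rw [minorsIdeal, Ideal.span_le]
  rintro _ ⟨f, g, rfl⟩
  set M := (Matrix.fromBlocks B 0 0 A).submatrix f g with hM
  by_cases h0 : M.det = 0
  · rw [h0]
    exact J.zero_mem
  obtain ⟨σ, hσ⟩ : ∃ σ : Equiv.Perm (Fin N), ∀ i, M (σ i) i ≠ 0 := by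
    by_contra! hcon
    refine h0 ?_
    rw [Matrix.det_apply]
    refine Finset.sum_eq_zero fun σ _ => ?_
    obtain ⟨i, hi⟩ := hcon σ
    have hprod : ∏ j, M (σ j) j = 0 := Finset.prod_eq_zero (Finset.mem_univ i) hi
    exact (congrArg (Equiv.Perm.sign σ • ·) hprod).trans (smul_zero _)
  have hfg : ∀ i, ((f ∘ σ) i).isLeft = (g i).isLeft := by
    intro i
    have := hσ i
    rw [hM, Matrix.submatrix_apply] at this
    rw [Function.comp_apply]
    revert this
    rcases f (σ i) with a | a <;> rcases g i with b | b <;> simp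
  obtain ⟨p, q, hpq, x, hx, y, hy, hxy⟩ := exists_det_submatrix_fromBlocks_eq B A (f ∘ σ) g hfg
  have hmem : (M.submatrix σ id).det ∈ J := by
    rw [hM, Matrix.submatrix_submatrix, Function.comp_id, hxy]
    exact hJ p q hpq (Ideal.mul_mem_mul hx hy)
  rw [Matrix.det_permute] at hmem
  rcases Int.units_eq_one_or (Equiv.Perm.sign σ) with h | h
  · simpa [h] using hmem
  · simpa [h] using hmem

end Blocks

theorem statement_0
    (R : Type*) [CommRing R] [IsDomain R] [IsNoetherianRing R]
    (hCM : IsCohenMacaulayRing R)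
    (M : Type*) [AddCommGroup M] [Module R M] [Nontrivial M]
    (r : ℕ → ℕ) (l : ℕ) (hbd : ∀ i : ℕ, l < i → r i = 0)
    (D : ∀ i : ℕ, Matrix (Fin (r i)) (Fin (r (i + 1))) R)
    (π : (Fin (r 0) → R) →ₗ[R] M) (hπ : Function.Surjective π)
    (hker : LinearMap.ker π = LinearMap.range (Matrix.mulVecLin (D 0)))
    (hexact : ∀ i : ℕ, LinearMap.ker (Matrix.mulVecLin (D i)) =
      LinearMap.range (Matrix.mulVecLin (D (i + 1)))) :
    ∀ i : ℕ, jumpIdeal r D (i + 1) = fittingIdealOf (D i) * fittingIdealOf (D (i + 1)) := by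
  intro i
  have hrk : detRank (D i) + detRank (D (i + 1)) = r (i + 1) := by
    simpa using detRank_add_detRank (D i) (D (i + 1)) (hexact i)
  rw [jumpIdeal, mul_comm]
  apply le_antisymm
  · refine minorsIdeal_fromBlocks_le _ _ _ fun p q hpq => ?_
    by_cases hp : minorsIdeal p (D (i + 1)) = ⊥
    · simp [hp]
    by_cases hq : minorsIdeal q (D i) = ⊥
    · simp [hq]
    -- Both sizes are bounded by the ranks, whose sum they attain.
    have hp' := le_detRank hp
    have hq' := le_detRank hq
    obtain rfl : p = detRank (D (i + 1)) := by omega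
    obtain rfl : q = detRank (D i) := by omega
    exact le_rfl
  · refine (mul_minorsIdeal_le _ _ _ _).trans_eq ?_
    rw [add_comm (detRank _), hrk]
end

section
/- (Propagation property, algebraic form.) For every i ≥ 0 one has rad(J^{-i}(M)) ⊆ rad(J^{-i-1}(M)); equivalently, the chain of radical ideals rad(J^{0}(M)) ⊆ rad(J^{-1}(M)) ⊆ rad(J^{-2}(M)) ⊆ ⋯ holds, so that the cohomology jump loci of M satisfy V^{0}(M) ⊇ V^{-1}(M) ⊇ V^{-2}(M) ⊇ ⋯ inside the maximal spectrum of R. -/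
section

open Matrix

/-- The determinant is a combination of minors of the right factor, by multilinearity in the
rows. -/
lemma det_mul_mem_span_minors {R : Type*} [CommRing R] {m : Type*} [Fintype m]
    {k : ℕ} (P : Matrix (Fin k) m R) (Y : Matrix m (Fin k) R) (I : Ideal R)
    (h : ∀ f : Fin k → m, (Y.submatrix f id).det ∈ I) : (P * Y).det ∈ I := by
  classical
  have h1 : P * Y = fun s => ∑ i, P s i • Y i := by
    ext s t
    simp [Matrix.mul_apply]
  have h2 : (P * Y).det =
      ∑ f : Fin k → m, (∏ s, P s (f s)) * (Y.submatrix f id).det := by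
    rw [h1]
    change (Matrix.detRowAlternating : (Fin k → R) [⋀^Fin k]→ₗ[R] R).toMultilinearMap _ = _
    rw [MultilinearMap.map_sum]
    refine Finset.sum_congr rfl fun f _ => ?_
    rw [MultilinearMap.map_smul_univ]
    rfl
  rw [h2]
  exact I.sum_mem fun f _ => I.mul_mem_left _ (h f)

lemma det_mul_mul_mem_minorsIdeal {R : Type*} [CommRing R] {m n : Type*} [Fintype m] [Fintype n]
    {k : ℕ} (P : Matrix (Fin k) m R) (Z : Matrix m n R) (Q : Matrix n (Fin k) R) :
    (P * Z * Q).det ∈ minorsIdeal k Z := by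
  rw [Matrix.mul_assoc]
  refine det_mul_mem_span_minors P _ _ fun f => ?_
  rw [← Matrix.det_transpose]
  have : ((Z * Q).submatrix f id)ᵀ = Qᵀ * (Z.submatrix f id)ᵀ := by
    rw [← Matrix.transpose_mul]; rfl
  rw [this]
  refine det_mul_mem_span_minors _ _ _ fun g => ?_
  rw [← Matrix.det_transpose]
  exact Ideal.subset_span ⟨f, g, rfl⟩

/-- A nonzero `n × n` minor `δ` of `A ⊕ B`, where `B * A = 0`, splits `A` up to the scalar `δ`. -/
lemma exists_quasi_inverse {R : Type*} [CommRing R] [IsDomain R] {n : ℕ} {c m : Type*}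
    [Fintype c] [Fintype m]
    (A : Matrix (Fin n) c R) (B : Matrix m (Fin n) R) (hBA : B * A = 0)
    (f : Fin n → Fin n ⊕ m) (g : Fin n → c ⊕ Fin n)
    (hδ : ((fromBlocks A 0 0 B).submatrix f g).det ≠ 0) :
    ∃ S : Matrix c (Fin n) R,
      A * S * A = ((fromBlocks A 0 0 B).submatrix f g).det • A := by
  classical
  set N := (fromBlocks A 0 0 B).submatrix f g with hN
  set δ := N.det with hδdef
  -- `P₁, P₂` select the rows and `Q₁, Q₂` the columns of the minor.
  let P₁ : Matrix (Fin n) (Fin n) R := (1 : Matrix (Fin n ⊕ m) (Fin n ⊕ m) R).submatrix f Sum.inl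
  let P₂ : Matrix (Fin n) m R := (1 : Matrix (Fin n ⊕ m) (Fin n ⊕ m) R).submatrix f Sum.inr
  let Q₁ : Matrix c (Fin n) R := (1 : Matrix (c ⊕ Fin n) (c ⊕ Fin n) R).submatrix Sum.inl g
  let Q₂ : Matrix (Fin n) (Fin n) R :=
    (1 : Matrix (c ⊕ Fin n) (c ⊕ Fin n) R).submatrix Sum.inr g
  -- `e` and `e'` project onto the rows, respectively columns, that come from the block `A`.
  let e : Matrix (Fin n) (Fin n) R := diagonal fun s => if (f s).isLeft then 1 else 0
  let e' : Matrix (Fin n) (Fin n) R := diagonal fun t => if (g t).isLeft then 1 else 0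
  have hP₁ : e * P₁ = P₁ := by
    ext s i
    rcases h : f s with x | x <;> simp [e, P₁, h, Matrix.one_apply]
  have hQ₂ : Q₂ * e' = 0 := by
    ext i t
    rcases h : g t with x | x <;> simp [e', Q₂, h, Matrix.one_apply]
  have hNsum : N = P₁ * A * Q₁ + P₂ * B * Q₂ := by
    ext s t
    rcases h : f s with x | x <;> rcases h' : g t with y | y <;>
      simp [hN, P₁, P₂, Q₁, Q₂, h, h', Matrix.one_apply, Matrix.mul_apply]
  have heN : e * N = N * e' := by
    ext s t
    rcases h : f s with x | x <;> rcases h' : g t with y | y <;>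
      simp [hN, e, e', h, h']
  set G := N.adjugate with hG
  have hNG : N * G = δ • 1 := Matrix.mul_adjugate N
  have hGN : G * N = δ • 1 := Matrix.adjugate_mul N
  have hGe : G * e = e' * G := by
    apply smul_right_injective _ hδ
    beta_reduce
    calc δ • (G * e) = G * e * (N * G) := by rw [hNG]; simp
      _ = G * (e * N) * G := by simp only [Matrix.mul_assoc]
      _ = (G * N) * (e' * G) := by rw [heN]; simp only [Matrix.mul_assoc]
      _ = δ • (e' * G) := by rw [hGN]; simp
  have hQGP : Q₂ * G * P₁ = 0 := by
    calc Q₂ * G * P₁ = Q₂ * (G * e) * P₁ := by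
          rw [Matrix.mul_assoc Q₂ (G * e), Matrix.mul_assoc G, hP₁, Matrix.mul_assoc]
      _ = Q₂ * e' * G * P₁ := by rw [hGe]; simp only [Matrix.mul_assoc]
      _ = 0 := by rw [hQ₂]; simp
  let X : Matrix (Fin n) (Fin n) R := A * Q₁ + Q₂
  let Y : Matrix (Fin n) (Fin n) R := P₁ + P₂ * B
  -- `Y * X` is `N` with an off-diagonal block added, so it is inverted by a Neumann series
  -- with two terms.
  let H : Matrix (Fin n) (Fin n) R := δ • G - G * P₁ * Q₂ * G
  have hYX : Y * X = N + P₁ * Q₂ := by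
    have : P₂ * B * (A * Q₁) = 0 := by
      rw [Matrix.mul_assoc, ← Matrix.mul_assoc B, hBA]; simp
    simp only [X, Y, Matrix.add_mul, Matrix.mul_add, hNsum, this]
    simp only [Matrix.mul_assoc]
    abel
  have hYXH : Y * (X * H) = (δ * δ) • 1 := by
    have h1 : N * (G * P₁ * Q₂ * G) = δ • (P₁ * Q₂ * G) := by
      calc N * (G * P₁ * Q₂ * G) = (N * G) * (P₁ * Q₂ * G) := by simp only [Matrix.mul_assoc]
        _ = _ := by rw [hNG]; simp
    have h2 : P₁ * Q₂ * (G * P₁ * Q₂ * G) = 0 := by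
      calc P₁ * Q₂ * (G * P₁ * Q₂ * G) = P₁ * (Q₂ * G * P₁) * (Q₂ * G) := by
            simp only [Matrix.mul_assoc]
        _ = 0 := by rw [hQGP]; simp
    rw [← Matrix.mul_assoc, hYX]
    simp only [H, Matrix.add_mul, Matrix.mul_sub, Matrix.mul_smul, hNG, h1, h2, smul_add, smul_smul]
    abel
  -- One-sided inverses up to a nonzero scalar are two-sided.
  have hXHY : (X * H) * Y = (δ * δ) • 1 := by
    have hdet : Y.det ≠ 0 := by
      intro h0
      have := congrArg Matrix.det hYXH
      rw [Matrix.det_mul, h0, zero_mul, Matrix.det_smul, Matrix.det_one, mul_one] at this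
      exact pow_ne_zero _ (mul_ne_zero hδ hδ) this.symm
    have h3 : Y * ((X * H) * Y) = Y * ((δ * δ) • 1) := by
      rw [← Matrix.mul_assoc, hYXH]; simp
    have h4 := congrArg (fun W => Y.adjugate * W) h3
    simp only [← Matrix.mul_assoc, Matrix.adjugate_mul] at h4
    apply smul_right_injective _ hdet
    beta_reduce
    rw [smul_comm]
    simpa [Matrix.mul_assoc] using h4
  refine ⟨Q₁ * G * P₁, ?_⟩
  have hYA : Y * A = P₁ * A := by
    simp only [Y, Matrix.add_mul, Matrix.mul_assoc, hBA]; simp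
  have hHP : H * P₁ = δ • (G * P₁) := by
    have : G * P₁ * Q₂ * G * P₁ = G * P₁ * (Q₂ * G * P₁) := by simp only [Matrix.mul_assoc]
    simp only [H, Matrix.sub_mul, this, hQGP]; simp
  apply smul_right_injective _ hδ
  beta_reduce
  symm
  calc δ • (δ • A) = ((X * H) * Y) * A := by rw [hXHY]; simp [smul_smul]
    _ = X * (H * P₁) * A := by
      rw [Matrix.mul_assoc _ Y, hYA]; simp only [Matrix.mul_assoc]
    _ = δ • ((A * Q₁ + Q₂) * (G * P₁) * A) := by rw [hHP]; simp [X]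
    _ = δ • (A * (Q₁ * G * P₁) * A) := by
      rw [Matrix.add_mul, ← Matrix.mul_assoc Q₂, hQGP, add_zero]
      simp only [Matrix.mul_assoc]

/-- The propagation step: an `n × n` minor of `A ⊕ B` has a power in the ideal of `k × k` minors
of `D ⊕ A`, when `D → A` is exact and `B * A = 0`. -/
lemma minor_mem_radical {R : Type*} [CommRing R] [IsDomain R] {n k : ℕ} {c m : Type*}
    [Fintype c] [Fintype m]
    (D : Matrix (Fin k) c R) (A : Matrix (Fin n) (Fin k) R) (B : Matrix m (Fin n) R)
    (hBA : B * A = 0)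
    (hex : LinearMap.ker A.mulVecLin = LinearMap.range D.mulVecLin)
    (f : Fin n → Fin n ⊕ m) (g : Fin n → Fin k ⊕ Fin n) :
    ((fromBlocks A 0 0 B).submatrix f g).det ∈ (minorsIdeal k (fromBlocks D 0 0 A)).radical := by
  classical
  by_cases hδ : ((fromBlocks A 0 0 B).submatrix f g).det = 0
  · rw [hδ]; exact Ideal.zero_mem _
  obtain ⟨S, hS⟩ := exists_quasi_inverse A B hBA f g hδ
  set δ := ((fromBlocks A 0 0 B).submatrix f g).det
  have hker : A * (δ • 1 - S * A) = 0 := by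
    rw [Matrix.mul_sub, ← Matrix.mul_assoc, hS]; simp
  have hcol : ∀ j, ∃ u, D *ᵥ u = (δ • 1 - S * A).col j := by
    intro j
    have : (δ • 1 - S * A).col j ∈ LinearMap.ker A.mulVecLin := by
      rw [LinearMap.mem_ker, Matrix.mulVecLin_apply]
      ext i
      exact congrFun (congrFun hker i) j
    rw [hex] at this
    exact this
  choose u hu using hcol
  have hDU : D * (Matrix.of u)ᵀ = δ • 1 - S * A := by
    ext i j
    exact congrFun (hu j) i
  have hfac : fromCols (1 : Matrix (Fin k) (Fin k) R) S * fromBlocks D 0 0 A *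
      fromRows (Matrix.of u)ᵀ (1 : Matrix (Fin k) (Fin k) R) =
      (δ • 1 : Matrix (Fin k) (Fin k) R) := by
    rw [Matrix.fromCols_mul_fromBlocks, Matrix.fromCols_mul_fromRows]
    simp [hDU]
  have := det_mul_mul_mem_minorsIdeal
    (fromCols (1 : Matrix (Fin k) (Fin k) R) S) (fromBlocks D 0 0 A)
    (fromRows (Matrix.of u)ᵀ (1 : Matrix (Fin k) (Fin k) R))
  rw [hfac, Matrix.det_smul, Matrix.det_one, mul_one] at this
  exact ⟨_, this⟩

end

theorem statement_2
    (R : Type*) [CommRing R] [IsDomain R] [IsNoetherianRing R]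
    (hCM : IsCohenMacaulayRing R)
    (M : Type*) [AddCommGroup M] [Module R M] [Nontrivial M]
    (r : ℕ → ℕ) (l : ℕ) (hbd : ∀ i : ℕ, l < i → r i = 0)
    (D : ∀ i : ℕ, Matrix (Fin (r i)) (Fin (r (i + 1))) R)
    (π : (Fin (r 0) → R) →ₗ[R] M) (hπ : Function.Surjective π)
    (hker : LinearMap.ker π = LinearMap.range (Matrix.mulVecLin (D 0)))
    (hexact : ∀ i : ℕ, LinearMap.ker (Matrix.mulVecLin (D i)) =
      LinearMap.range (Matrix.mulVecLin (D (i + 1)))) :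
    (∀ i : ℕ, (jumpIdeal r D i).radical ≤ (jumpIdeal r D (i + 1)).radical) ∧
      (∀ i : ℕ, {χ : Ideal R | χ.IsMaximal ∧ jumpIdeal r D (i + 1) ≤ χ} ⊆
        {χ : Ideal R | χ.IsMaximal ∧ jumpIdeal r D i ≤ χ}) := by
  have key : ∀ i : ℕ, (jumpIdeal r D i).radical ≤ (jumpIdeal r D (i + 1)).radical := by
    intro i
    rw [Ideal.radical_le_radical_iff]
    cases i with
    | zero =>
      refine Ideal.span_le.2 ?_
      rintro x ⟨f, g, rfl⟩
      exact minor_mem_radical (D 1) (D 0) (0 : Matrix (Fin 0) (Fin (r 0)) R) (by simp)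
        (hexact 0) (Sum.inl ∘ f) (Sum.inl ∘ g)
    | succ i =>
      refine Ideal.span_le.2 ?_
      rintro x ⟨f, g, rfl⟩
      refine minor_mem_radical (D (i + 2)) (D (i + 1)) (D i) ?_ (hexact (i + 1)) f g
      ext a b
      have h : (D (i + 1)).mulVecLin (Pi.single b 1) ∈ LinearMap.ker (D i).mulVecLin := by
        rw [hexact i]; exact LinearMap.mem_range_self _ _
      rw [LinearMap.mem_ker, Matrix.mulVecLin_apply, Matrix.mulVecLin_apply,
        Matrix.mulVec_mulVec, Matrix.mulVec_single_one] at h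
      exact congrFun h a
  refine ⟨key, fun i χ hχ => ⟨hχ.1, ?_⟩⟩
  exact Ideal.le_radical.trans ((key i).trans (hχ.1.isPrime.radical_le_iff.2 hχ.2))
end

section
/- (Codimension lower bound, algebraic form.) For every i ≥ 0, every prime ideal of R containing the jumping ideal J^{-i}(M) has height at least i; in particular the codimension of the jump locus V^{-i}(M) in the maximal spectrum of R is at least i. -/
/-! ### Rank and minors -/

open Matrix in
/-- A matrix over a field of rank at least `a` has `a` linearly independent rows. -/
lemma exists_linearIndependent_rows {k m n : Type*} [Field k] [Fintype m] [Fintype n] {a : ℕ}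
    (A : Matrix m n k) (ha : a ≤ A.rank) :
    ∃ f : Fin a → m, LinearIndependent k (A.submatrix f id).row := by
  obtain ⟨κ, e, he, hspan, hli⟩ := exists_linearIndependent' k A.row
  have : Fintype κ := Fintype.ofInjective e he
  have hcard : Fintype.card κ = A.rank := by
    rw [rank_eq_finrank_span_row, ← hspan, finrank_span_eq_card hli]
  obtain ⟨g⟩ : Nonempty (Fin a ↪ κ) :=
    Function.Embedding.nonempty_of_card_le (by simpa [hcard] using ha)
  exact ⟨e ∘ g, hli.comp g g.injective⟩

lemma submatrix_rank_le {k m n m' n' : Type*} [Field k] [Fintype m] [Fintype n] [Fintype m']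
    [Fintype n'] (A : Matrix m n k) (f : m' → m) (g : n' → n) :
    (A.submatrix f g).rank ≤ A.rank := by
  rw [← Matrix.eRank_toNat_eq_rank, ← Matrix.eRank_toNat_eq_rank]
  exact ENat.toNat_le_toNat (A.eRank_submatrix_le f g)
    ((A.eRank_le_card_width.trans_lt (by simp [ENat.card_eq_coe_fintype_card])).ne)

/-- The rank of a matrix over a field is detected by its nonvanishing minors. -/
lemma le_rank_iff_exists_minor {k m n : Type*} [Field k] [Fintype m] [Fintype n] {a : ℕ}
    (A : Matrix m n k) :
    a ≤ A.rank ↔ ∃ (f : Fin a → m) (g : Fin a → n), (A.submatrix f g).det ≠ 0 := by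
  constructor
  · intro ha
    obtain ⟨f, hf⟩ := exists_linearIndependent_rows A ha
    have h1 : (A.submatrix f id).rank = a := by simpa using hf.rank_matrix
    obtain ⟨g, hg⟩ := exists_linearIndependent_rows (a := a) (A.submatrix f id).transpose
      (by rw [Matrix.rank_transpose, h1])
    refine ⟨f, g, ?_⟩
    rw [Matrix.linearIndependent_rows_iff_isUnit, Matrix.isUnit_iff_isUnit_det,
      isUnit_iff_ne_zero, ← Matrix.det_transpose] at hg
    exact hg
  · rintro ⟨f, g, h⟩
    have := Matrix.rank_of_det_ne_zero h
    rw [Fintype.card_fin] at this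
    exact this ▸ submatrix_rank_le A f g

lemma rank_fromBlocks_diag {k m n m' n' : Type*} [Field k] [Fintype m] [Fintype n] [Fintype m']
    [Fintype n'] (A : Matrix m n k) (B : Matrix m' n' k) :
    (Matrix.fromBlocks A 0 0 B).rank = A.rank + B.rank := by
  classical
  have h : (Matrix.fromBlocks A 0 0 B).mulVecLin =
      (LinearEquiv.sumArrowLequivProdArrow m m' k k).symm.toLinearMap ∘ₗ
        (A.mulVecLin.prodMap B.mulVecLin) ∘ₗ
        (LinearEquiv.sumArrowLequivProdArrow n n' k k).toLinearMap := by
    ext x i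
    cases i <;> cases x <;>
    simp [LinearEquiv.sumArrowLequivProdArrow, Equiv.sumArrowEquivProdArrow, Matrix.mulVec, dotProduct, Pi.single_apply]
  -- the product of the two ranges is the range of the product of the two inclusions
  have h2 : (LinearMap.range A.mulVecLin).prod (LinearMap.range B.mulVecLin) =
      LinearMap.range ((LinearMap.range A.mulVecLin).subtype.prodMap
        (LinearMap.range B.mulVecLin).subtype) := by
    rw [LinearMap.range_prodMap, Submodule.range_subtype, Submodule.range_subtype]
  rw [Matrix.rank, h, LinearMap.range_comp, LinearEquiv.finrank_map_eq,
    LinearMap.range_comp_of_range_eq_top _ (LinearEquiv.range _), LinearMap.range_prodMap, h2,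
    LinearMap.finrank_range_of_inj, Module.finrank_prod]
  · rfl
  · exact Function.Injective.prodMap Subtype.val_injective Subtype.val_injective

/-- The `a × a` minors of `A` all lie in the kernel of a map to a field exactly when `A` has rank
less than `a` over that field. -/
lemma minorsIdeal_le_iff {R k m n : Type*} [CommRing R] [Field k] [Fintype m] [Fintype n]
    (φ : R →+* k) (a : ℕ) (A : Matrix m n R) :
    minorsIdeal a A ≤ RingHom.ker φ ↔ (A.map φ).rank < a := by
  rw [← not_le, le_rank_iff_exists_minor, minorsIdeal, Ideal.span_le]
  push Not
  have key : ∀ (f : Fin a → m) (g : Fin a → n),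
      ((A.map φ).submatrix f g).det = φ (A.submatrix f g).det := fun f g => by
    rw [RingHom.map_det]; rfl
  constructor
  · intro h f g
    rw [key]
    exact h ⟨f, g, rfl⟩
  · rintro h _ ⟨f, g, rfl⟩
    exact (key f g).symm.trans (h f g)

/-- If `A` has rank at most `a` and `δ` is the nonzero determinant of the `a × a`
submatrix with rows `f` and columns `g`, then `δ` times any row of `A` is a combination of the rows
`f`, with explicit coefficients lying in the span of the columns `g`. -/
lemma smul_eq_mul_adjugate_mul_field {K m n : Type*} [Field K] [Fintype m] [Fintype n] {a : ℕ}
    (A : Matrix m n K) (ha : A.rank ≤ a) (f : Fin a → m) (g : Fin a → n)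
    (hδ : (A.submatrix f g).det ≠ 0) :
    (A.submatrix f g).det • A =
      A.submatrix id g * (A.submatrix f g).adjugate * A.submatrix f id := by
  classical
  have hle : LinearMap.range (A.submatrix id g).mulVecLin ≤ LinearMap.range A.mulVecLin := by
    have : A.submatrix id g = A * (1 : Matrix n n K).submatrix id g := by
      ext i j
      simp [Matrix.mul_apply, Matrix.one_apply]
    rw [this, Matrix.mulVecLin_mul]
    exact LinearMap.range_comp_le_range _ _
  have hrk : A.rank ≤ (A.submatrix id g).rank := by
    refine ha.trans ?_
    rw [le_rank_iff_exists_minor]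
    exact ⟨f, id, hδ⟩
  have heq := Submodule.eq_of_le_of_finrank_le hle hrk
  have hcol : ∀ j, ∃ c, (A.submatrix id g).mulVec c = A.col j := fun j => by
    have : A.col j ∈ LinearMap.range A.mulVecLin := ⟨Pi.single j 1, by simp⟩
    rw [← heq] at this
    exact this
  choose c hc using hcol
  have hAC : A = A.submatrix id g * (Matrix.of c).transpose := by
    ext i j
    exact (congrFun (hc j) i).symm
  have hBC : A.submatrix f id = A.submatrix f g * (Matrix.of c).transpose := by
    conv_lhs => rw [hAC]
    ext i j
    simp [Matrix.mul_apply]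
  rw [hBC, Matrix.mul_assoc, ← Matrix.mul_assoc _ (A.submatrix f g), Matrix.adjugate_mul,
    Matrix.smul_mul, Matrix.one_mul, Matrix.mul_smul, ← hAC]

/-- The preceding identity over a ring embedded in a field, the rank being taken over the field. -/
lemma smul_eq_mul_adjugate_mul {R K m n : Type*} [CommRing R] [Field K] [Fintype m] [Fintype n]
    {a : ℕ} (ψ : R →+* K) (hψ : Function.Injective ψ) (A : Matrix m n R)
    (ha : (A.map ψ).rank ≤ a) (f : Fin a → m) (g : Fin a → n) (hδ : (A.submatrix f g).det ≠ 0) :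
    (A.submatrix f g).det • A =
      A.submatrix id g * (A.submatrix f g).adjugate * A.submatrix f id := by
  have hdet : ((A.map ψ).submatrix f g).det = ψ (A.submatrix f g).det := by
    rw [RingHom.map_det]; rfl
  have hadj : ((A.map ψ).submatrix f g).adjugate = (A.submatrix f g).adjugate.map ψ := by
    exact (RingHom.map_adjugate ψ (A.submatrix f g)).symm
  have key := smul_eq_mul_adjugate_mul_field (A.map ψ) ha f g
    (by rw [hdet]; exact (map_ne_zero_iff ψ hψ).2 hδ)
  apply Matrix.map_injective hψ
  rw [hdet, hadj] at key
  beta_reduce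
  rw [Matrix.map_mul, Matrix.map_mul]
  refine Eq.trans ?_ key
  ext i j
  simp

/-! ### Descent along the complex -/

/-- The local heart of the argument.  Let `m₃ → m₂ → m₁ → m₀` be three consecutive maps `C`, `A`,
`B` of a complex of free modules, and suppose `q` is the annihilator of an element `u` of a module
`N` such that the complex tensored with `N` is exact at `m₁`.  If `q` does not contain the jumping
ideal at `m₂`, it does not contain the one at `m₁`. -/
lemma not_jump_of_not_jump_succ {R : Type*} [CommRing R] [IsDomain R] {m₀ m₁ m₂ m₃ : Type*}
    [Fintype m₀] [Fintype m₁] [Fintype m₂] [Fintype m₃]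
    (B : Matrix m₀ m₁ R) (A : Matrix m₁ m₂ R) (C : Matrix m₂ m₃ R) (hAC : A * C = 0)
    (q : Ideal R) [q.IsPrime]
    {N : Type*} [AddCommGroup N] [Module R N] (u : N) (hu : ∀ x : R, x ∈ q ↔ x • u = 0)
    (hex : ∀ v : m₁ → N, (∀ i, ∑ j, B i j • v j = 0) → ∃ w : m₂ → N, ∀ i, v i = ∑ j, A i j • w j)
    (h2 : ¬ minorsIdeal (Fintype.card m₂) (Matrix.fromBlocks C 0 0 A) ≤ q) :
    ¬ minorsIdeal (Fintype.card m₁) (Matrix.fromBlocks A 0 0 B) ≤ q := by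
  classical
  intro h1
  let k := FractionRing (R ⧸ q)
  let φ : R →+* k := (algebraMap (R ⧸ q) k).comp (Ideal.Quotient.mk q)
  have hφ : RingHom.ker φ = q := by
    ext x
    simp [φ, k, RingHom.mem_ker, Ideal.Quotient.eq_zero_iff_mem]
  have hφ' : ∀ x, φ x = 0 ↔ x ∈ q := fun x => SetLike.ext_iff.1 hφ x
  let K := FractionRing R
  let ψ : R →+* K := algebraMap R K
  have hψ : Function.Injective ψ := IsFractionRing.injective R K
  -- the rank of a matrix over the residue field is at most its rank over the fraction field
  have hsemi : (C.map φ).rank ≤ (C.map ψ).rank := by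
    by_contra! h
    have hz : minorsIdeal (C.map φ).rank C ≤ RingHom.ker φ := by
      refine ((minorsIdeal_le_iff ψ _ C).2 h).trans ?_
      rw [(RingHom.injective_iff_ker_eq_bot ψ).1 hψ]
      exact bot_le
    exact lt_irrefl _ ((minorsIdeal_le_iff φ _ C).1 hz)
  rw [← hφ, minorsIdeal_le_iff, Matrix.fromBlocks_map, Matrix.map_zero _ φ.map_zero,
    Matrix.map_zero _ φ.map_zero, rank_fromBlocks_diag] at h1 h2
  -- hence `A` has the same rank over the two fields
  have hAC' : (A.map ψ).rank + (C.map ψ).rank ≤ Fintype.card m₂ := by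
    apply Matrix.rank_add_rank_le_card_of_mul_eq_zero
    rw [← Matrix.map_mul, hAC, Matrix.map_zero _ ψ.map_zero]
  have hrank : (A.map ψ).rank ≤ (A.map φ).rank := by omega
  obtain ⟨f, g, hfg⟩ := (le_rank_iff_exists_minor (A.map φ)).1 le_rfl
  have hdet : ((A.map φ).submatrix f g).det = φ (A.submatrix f g).det := by
    rw [RingHom.map_det]; rfl
  rw [hdet] at hfg
  have hid := smul_eq_mul_adjugate_mul ψ hψ A hrank f g (fun h => hfg (by rw [h, map_zero]))
  set δ := (A.submatrix f g).det
  -- a cycle over the residue field which is not a boundary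
  obtain ⟨v, hvB, hvA⟩ : ∃ v : m₁ → k, (B.map φ).mulVec v = 0 ∧
      v ∉ LinearMap.range (A.map φ).mulVecLin := by
    by_contra! hcon
    have hle : LinearMap.ker (B.map φ).mulVecLin ≤ LinearMap.range (A.map φ).mulVecLin :=
      fun v hv => hcon v hv
    have e1 := Submodule.finrank_mono hle
    have e2 := LinearMap.finrank_range_add_finrank_ker (B.map φ).mulVecLin
    rw [Module.finrank_fintype_fun_eq_card] at e2
    simp only [Matrix.rank] at h1
    omega
  -- clear its denominators and lift it to `R`
  obtain ⟨b, hb⟩ := IsLocalization.exist_integer_multiples_of_finite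
    (nonZeroDivisors (R ⧸ q)) v
  have hlift : ∀ i, ∃ x : R, φ x = algebraMap (R ⧸ q) k b * v i := fun i => by
    obtain ⟨y, hy⟩ := hb i
    obtain ⟨x, rfl⟩ := Ideal.Quotient.mk_surjective y
    exact ⟨x, by rw [← Algebra.smul_def]; exact hy⟩
  choose x hx using hlift
  have hb0 : algebraMap (R ⧸ q) k b ≠ 0 := by
    simp [k]
  obtain ⟨w, hw⟩ := hex (fun i => x i • u) (fun i => by
    simp_rw [smul_smul]
    rw [← Finset.sum_smul, ← hu, ← hφ', map_sum]
    have := congrFun hvB i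
    simp only [Matrix.mulVec, dotProduct, Matrix.map_apply, Pi.zero_apply] at this
    calc ∑ j, φ (B i j * x j) = ∑ j, algebraMap (R ⧸ q) k b * (φ (B i j) * v j) :=
          Finset.sum_congr rfl fun j _ => by rw [map_mul, hx, mul_left_comm]
      _ = 0 := by rw [← Finset.mul_sum, this, mul_zero])
  set P := A.submatrix id g * (A.submatrix f g).adjugate
  have hP : ∀ i, (δ * x i - ∑ c, P i c * x (f c)) ∈ q := fun i => by
    rw [hu, sub_smul, sub_eq_zero, mul_smul, hw i, Finset.sum_smul, Finset.smul_sum]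
    have e1 : ∀ j, δ * A i j = ∑ c, P i c * A (f c) j := fun j => congrFun (congrFun hid i) j
    simp_rw [mul_smul, hw (f _), Finset.smul_sum, smul_smul]
    rw [Finset.sum_comm]
    simp_rw [← Finset.sum_smul, e1]
  -- modulo `q`, this exhibits `v` as a boundary
  apply hvA
  have hmem : (φ δ * algebraMap (R ⧸ q) k b) • v ∈ LinearMap.range (A.map φ).mulVecLin := by
    refine ⟨((1 : Matrix m₂ m₂ R).submatrix id g * (A.submatrix f g).adjugate).map φ |>.mulVec
      (fun c => φ (x (f c))), ?_⟩
    rw [Matrix.mulVecLin_apply, Matrix.mulVec_mulVec, ← Matrix.map_mul, ← Matrix.mul_assoc]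
    have : A * (1 : Matrix m₂ m₂ R).submatrix id g = A.submatrix id g := by
      ext i j
      simp [Matrix.mul_apply, Matrix.one_apply]
    rw [this]
    ext i
    have := (hφ' _).2 (hP i)
    rw [map_sub, sub_eq_zero, map_mul, hx, map_sum] at this
    rw [Pi.smul_apply, smul_eq_mul, mul_assoc, this]
    simp [Matrix.mulVec, dotProduct, P]
  exact (Submodule.smul_mem_iff _ (mul_ne_zero hfg hb0)).1 hmem

/-! ### Exactness modulo a regular sequence -/

/-- If the complex with differentials `B`, `A`, `C` tensored with `N` is exact at both inner spots
and `x` is a nonzerodivisor on `N`, then tensored with `N' = N / xN` it is still exact at the upper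
inner spot. -/
lemma exact_quotient {R : Type*} [CommRing R] {m₀ m₁ m₂ m₃ : Type*}
    [Fintype m₀] [Fintype m₁] [Fintype m₂] [Fintype m₃]
    (B : Matrix m₀ m₁ R) (A : Matrix m₁ m₂ R) (C : Matrix m₂ m₃ R) (hBA : B * A = 0)
    {N N' : Type*} [AddCommGroup N] [Module R N] [AddCommGroup N'] [Module R N']
    (p : N →ₗ[R] N') (hp : Function.Surjective p) (x : R) (hx : IsSMulRegular N x)
    (hker : ∀ y, p y = 0 ↔ ∃ z, y = x • z)
    (hex1 : ∀ v : m₁ → N, (∀ i, ∑ j, B i j • v j = 0) → ∃ w : m₂ → N, ∀ i, v i = ∑ j, A i j • w j)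
    (hex2 : ∀ v : m₂ → N, (∀ i, ∑ j, A i j • v j = 0) → ∃ w : m₃ → N, ∀ i, v i = ∑ j, C i j • w j)
    (v : m₂ → N') (hv : ∀ i, ∑ j, A i j • v j = 0) :
    ∃ w : m₃ → N', ∀ i, v i = ∑ j, C i j • w j := by
  choose v' hv' using fun j => hp (v j)
  have h1 : ∀ i, ∃ z, ∑ j, A i j • v' j = x • z := fun i => by
    rw [← hker, map_sum]
    simp_rw [map_smul, hv']
    exact hv i
  choose z hz using h1
  obtain ⟨y, hy⟩ := hex1 z (fun i => by
    apply hx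
    simp only [smul_zero, Finset.smul_sum]
    simp_rw [smul_comm x, ← hz, Finset.smul_sum, smul_smul]
    rw [Finset.sum_comm]
    simp_rw [← Finset.sum_smul]
    refine Finset.sum_eq_zero fun j _ => ?_
    have : ∑ c, B i c * A c j = 0 := congrFun (congrFun hBA i) j
    rw [this, zero_smul])
  obtain ⟨w, hw⟩ := hex2 (fun j => v' j - x • y j) (fun i => by
    simp_rw [smul_sub, Finset.sum_sub_distrib, hz, hy, Finset.smul_sum, smul_comm x]
    simp)
  refine ⟨fun j => p (w j), fun i => ?_⟩
  have := congrArg p (hw i)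
  rw [map_sub, hv', (hker (x • y i)).2 ⟨_, rfl⟩, sub_zero, map_sum] at this
  simpa using this

/-- The complex with differentials `D` tensored with `N` is exact in homological degree
`j + 1`. -/
def ExactTensor {R : Type*} [CommRing R] (r : ℕ → ℕ)
    (D : ∀ i : ℕ, Matrix (Fin (r i)) (Fin (r (i + 1))) R) (N : Type*) [AddCommGroup N] [Module R N]
    (j : ℕ) : Prop :=
  ∀ v : Fin (r (j + 1)) → N, (∀ a, ∑ b, D j a b • v b = 0) →
    ∃ w : Fin (r (j + 2)) → N, ∀ a, v a = ∑ b, D (j + 1) a b • w b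

/-- If the prime `q` is the annihilator of `u ∈ N` and the bounded complex tensored with `N` is
exact in degrees above `t`, then `q` contains no jumping ideal of index above `t`. -/
lemma not_jumpIdeal_le {R : Type*} [CommRing R] [IsDomain R]
    (r : ℕ → ℕ) (l : ℕ) (hbd : ∀ i : ℕ, l < i → r i = 0)
    (D : ∀ i : ℕ, Matrix (Fin (r i)) (Fin (r (i + 1))) R)
    (hDD : ∀ i, D i * D (i + 1) = 0) (q : Ideal R) [q.IsPrime]
    {N : Type*} [AddCommGroup N] [Module R N] (u : N) (hu : ∀ x : R, x ∈ q ↔ x • u = 0)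
    (t : ℕ) (hex : ∀ j, t ≤ j → ExactTensor r D N j) (j : ℕ) (hj : t ≤ j) :
    ¬ jumpIdeal r D (j + 1) ≤ q := by
  have hstep : ∀ j, t ≤ j → ¬ jumpIdeal r D (j + 2) ≤ q → ¬ jumpIdeal r D (j + 1) ≤ q := by
    intro j hj h2
    have := not_jump_of_not_jump_succ (D j) (D (j + 1)) (D (j + 2)) (hDD (j + 1)) q u hu
      (hex j hj)
    simp only [Fintype.card_fin] at this
    exact this h2
  have htop : ∀ j, l ≤ j → ¬ jumpIdeal r D (j + 1) ≤ q := by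
    intro j hj h
    have h1 : (1 : R) ∈ jumpIdeal r D (j + 1) := by
      have : IsEmpty (Fin (r (j + 1))) := by rw [hbd (j + 1) (by omega)]; infer_instance
      exact Ideal.subset_span ⟨isEmptyElim, isEmptyElim, (Matrix.det_isEmpty).symm⟩
    exact ‹q.IsPrime›.ne_top ((Ideal.eq_top_iff_one q).2 (h h1))
  by_cases hlj : l ≤ j
  · exact htop j hlj
  · induction h : l - j generalizing j with
    | zero => omega
    | succ c ih =>
      apply hstep j hj
      by_cases hl : l ≤ j + 1
      · exact htop (j + 1) hl
      · exact ih (j + 1) (by omega) hl (by omega)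

/-! ### Construction of the regular sequence -/

/-- An ideal consisting of zero divisors on a nonzero finite module over a Noetherian ring is
contained in a prime which is the annihilator of an element. -/
lemma exists_regular_or_annihilator {R : Type*} [CommRing R] [IsNoetherianRing R] (p : Ideal R)
    (N : Type*) [AddCommGroup N] [Module R N] [Module.Finite R N] [Nontrivial N] :
    (∃ x ∈ p, IsSMulRegular N x) ∨
      ∃ q : Ideal R, q.IsPrime ∧ p ≤ q ∧ ∃ u : N, ∀ x : R, x ∈ q ↔ x • u = 0 := by
  by_contra! h
  obtain ⟨h1, h2⟩ := h
  obtain ⟨I, hI⟩ := associatedPrimes.nonempty R N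
  obtain ⟨q, hq, hpq⟩ := (Ideal.subset_union_prime_finite (associatedPrimes.finite R N)
    (f := id) (I := p) I I (fun J hJ _ _ => IsAssociatedPrime.isPrime hJ)).1 (by
      simp only [id]
      rw [biUnion_associatedPrimes_eq_compl_regular R N]
      exact fun x hx => h1 x hx)
  obtain ⟨hqp, u, hu⟩ := isAssociatedPrime_iff.1 hq
  obtain ⟨x, hx⟩ := h2 q hqp hpq u
  have : x ∈ q ↔ x • u = 0 := by
    rw [hu, Submodule.mem_colon_singleton, Submodule.mem_bot]
  tauto

open RingTheory.Sequence in
/-- A prime containing the jumping ideal of index `i` contains a regular sequence of every length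
`t ≤ i`, and the resolution modulo that sequence is exact in degrees above `t`. -/
lemma exists_regular_sequence {R : Type*} [CommRing R] [IsDomain R] [IsNoetherianRing R]
    (r : ℕ → ℕ) (l : ℕ) (hbd : ∀ i : ℕ, l < i → r i = 0)
    (D : ∀ i : ℕ, Matrix (Fin (r i)) (Fin (r (i + 1))) R)
    (hexact : ∀ i : ℕ, LinearMap.ker (Matrix.mulVecLin (D i)) =
      LinearMap.range (Matrix.mulVecLin (D (i + 1))))
    (i : ℕ) (p : Ideal R) (hp : p.IsPrime) (hJ : jumpIdeal r D i ≤ p) (t : ℕ) (ht : t ≤ i) :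
    ∃ rs : List R, rs.length = t ∧ (∀ x ∈ rs, x ∈ p) ∧ IsWeaklyRegular R rs ∧
      ∀ j, t ≤ j → ExactTensor r D (R ⧸ (Ideal.ofList rs • ⊤ : Submodule R R)) j := by
  have hDD : ∀ i, D i * D (i + 1) = 0 := fun i => by
    apply Matrix.mulVec_injective
    funext v
    rw [← Matrix.mulVec_mulVec, Matrix.zero_mulVec]
    have : (D (i + 1)).mulVecLin v ∈ LinearMap.ker (D i).mulVecLin := by
      rw [hexact]; exact ⟨v, rfl⟩
    exact this
  induction t with
  | zero =>
    refine ⟨[], rfl, by simp, IsWeaklyRegular.nil R R, fun j _ v hv => ?_⟩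
    -- the quotient by the empty sequence is `R` itself
    let e : R ≃ₗ[R] (R ⧸ (Ideal.ofList ([] : List R) • ⊤ : Submodule R R)) :=
      (Submodule.quotEquivOfEqBot _ (by simp)).symm
    have hmem : (fun b => e.symm (v b)) ∈ LinearMap.ker (D j).mulVecLin := by
      rw [LinearMap.mem_ker]
      funext a
      have := congrArg e.symm (hv a)
      simpa [Matrix.mulVec, dotProduct] using this
    rw [hexact] at hmem
    obtain ⟨w, hw⟩ := hmem
    refine ⟨fun b => e (w b), fun a => e.symm.injective ?_⟩
    have := congrFun hw a
    simpa [Matrix.mulVec, dotProduct] using this.symm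
  | succ t ih =>
    obtain ⟨rs, hlen, hmem, hreg, hex⟩ := ih (by omega)
    have hle : (Ideal.ofList rs • ⊤ : Submodule R R) ≤ p := by
      rw [smul_eq_mul, Ideal.mul_top]
      exact Ideal.span_le.2 hmem
    have : Nontrivial (R ⧸ (Ideal.ofList rs • ⊤ : Submodule R R)) :=
      Submodule.Quotient.nontrivial_iff.2 (fun h => hp.ne_top (top_le_iff.1 (h ▸ hle)))
    obtain ⟨x, hxp, hx⟩ | ⟨q, hq, hpq, u, hu⟩ := exists_regular_or_annihilator p
      (R ⧸ (Ideal.ofList rs • ⊤ : Submodule R R))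
    · have hsub : (Ideal.ofList rs • ⊤ : Submodule R R) ≤ Ideal.ofList (rs ++ [x]) • ⊤ := by
        rw [Ideal.ofList_append]
        exact Submodule.smul_mono_left le_sup_left
      refine ⟨rs ++ [x], by simp [hlen], ?_, ?_, fun j hj => ?_⟩
      · simpa [or_imp, forall_and, hxp] using hmem
      · rw [isWeaklyRegular_append_iff]
        exact ⟨hreg, (isWeaklyRegular_singleton_iff _ _).2 hx⟩
      · obtain ⟨j, rfl⟩ : ∃ j', j = j' + 1 := ⟨j - 1, by omega⟩
        refine exact_quotient (D j) (D (j + 1)) (D (j + 2)) (hDD j) (Submodule.factor hsub)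
          (Submodule.factor_surjective hsub) x hx ?_ (hex j (by omega)) (hex (j + 1) (by omega))
        intro y
        obtain ⟨y, rfl⟩ := Submodule.Quotient.mk_surjective _ y
        have hfac : Submodule.factor hsub (Submodule.Quotient.mk y) = Submodule.Quotient.mk y := rfl
        rw [hfac, Submodule.Quotient.mk_eq_zero, Ideal.ofList_append, Ideal.ofList_singleton,
          smul_eq_mul, Ideal.mul_top]
        constructor
        · intro h
          obtain ⟨a, ha, b, hb, rfl⟩ := Submodule.mem_sup.1 h
          obtain ⟨c, rfl⟩ := Ideal.mem_span_singleton'.1 hb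
          refine ⟨Submodule.Quotient.mk c, ?_⟩
          rw [← Submodule.Quotient.mk_smul, Submodule.Quotient.eq, smul_eq_mul, Ideal.mul_top,
            smul_eq_mul, mul_comm x, add_sub_cancel_right]
          exact ha
        · rintro ⟨z, hz⟩
          obtain ⟨z, rfl⟩ := Submodule.Quotient.mk_surjective _ z
          rw [← Submodule.Quotient.mk_smul, Submodule.Quotient.eq, smul_eq_mul, Ideal.mul_top,
            smul_eq_mul] at hz
          exact Submodule.mem_sup.2 ⟨_, hz, x * z,
            Ideal.mul_mem_right _ _ (Ideal.mem_span_singleton_self x), sub_add_cancel _ _⟩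
    · obtain ⟨j, rfl⟩ : ∃ j, i = j + 1 := ⟨i - 1, by omega⟩
      exact absurd (hJ.trans hpq)
        (not_jumpIdeal_le r l hbd D hDD q u hu t hex j (by omega))

theorem statement_3
    (R : Type*) [CommRing R] [IsDomain R] [IsNoetherianRing R]
    (hCM : IsCohenMacaulayRing R)
    (M : Type*) [AddCommGroup M] [Module R M] [Nontrivial M]
    (r : ℕ → ℕ) (l : ℕ) (hbd : ∀ i : ℕ, l < i → r i = 0)
    (D : ∀ i : ℕ, Matrix (Fin (r i)) (Fin (r (i + 1))) R)
    (π : (Fin (r 0) → R) →ₗ[R] M) (hπ : Function.Surjective π)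
    (hker : LinearMap.ker π = LinearMap.range (Matrix.mulVecLin (D 0)))
    (hexact : ∀ i : ℕ, LinearMap.ker (Matrix.mulVecLin (D i)) =
      LinearMap.range (Matrix.mulVecLin (D (i + 1)))) :
    ∀ (i : ℕ) (p : Ideal R), p.IsPrime → jumpIdeal r D i ≤ p →
      (i : ℕ∞) ≤ idealHeight R p := by
  intro i p hp hJ
  obtain ⟨rs, hlen, hmem, hreg, -⟩ :=
    exists_regular_sequence r l hbd D hexact i p hp hJ i le_rfl
  rw [← hCM p hp.ne_top]
  refine le_sSup ⟨rs, by rw [hlen], hmem, hreg, fun h => hp.ne_top ?_⟩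
  rw [smul_eq_mul, Ideal.mul_top] at h
  exact top_le_iff.1 (h.trans_le (Ideal.span_le.2 hmem))
end
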